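/- Sturm separation: let ψ : ℝ → ℝ be a twice continuously differentiable solution of the mode-zero Jacobi equation (B·ψ')'(s) + B(s)·(|II|²(s) − 2)·ψ(s) = 0 with initial data ψ(0) = 1/(2·K) and ψ'(0) = 0, where |II|²(s) := 2·(B''(s)/B(s) − 1). Then ψ has at most one zero in (0, ∞); that is, there do not exist s₁, s₂ with 0 < s₁ < s₂ and ψ(s₁) = ψ(s₂) = 0. -/

import Mathlib

/-!
The axial boost field `u_* = -B'` solves the same mode-zero Jacobi equation as `ψ`, because
`B * B'' = 2 * B ^ 2 + 1 - B' ^ 2`, and it has no zero in `(0, ∞)`. Between two zeros of a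
nontrivial solution every other solution vanishes somewhere (Sturm), so `ψ` cannot have two zeros
there. For Sturm's theorem, the Wronskian of two solutions `u` and `v` is constant. If `v` has two
zeros and `u` none on the closed interval they bound, Rolle applied to `v / u` makes the Wronskian
vanish, so `v` and `v'` are both zero at a zero of `v`, and `v = 0` by uniqueness for the linear
equation.
-/

namespace MoriCatenoid

/-- Profile function `B(s) = √(a·cosh(2s) − 1/2)` of the Mori family. -/
noncomputable def B (a s : ℝ) : ℝ := Real.sqrt (a * Real.cosh (2 * s) - 1 / 2)

/-- Profile function `A(s) = √(a·cosh(2s) + 1/2)` of the Mori family. -/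
noncomputable def A (a s : ℝ) : ℝ := Real.sqrt (a * Real.cosh (2 * s) + 1 / 2)

/-- The constant `K = √(a² − 1/4)`. -/
noncomputable def K (a : ℝ) : ℝ := Real.sqrt (a ^ 2 - 1 / 4)

/-- The angle function `φ(s) = K·∫₀ˢ dt/(A(t)²·B(t))`. -/
noncomputable def φ (a s : ℝ) : ℝ := K a * ∫ t in (0:ℝ)..s, 1 / ((A a t) ^ 2 * B a t)

/-- The mode-one Jacobi field `f_*(s) = d/ds (A(s)·cosh(φ(s)))`. -/
noncomputable def fstar (a s : ℝ) : ℝ := deriv (fun t => A a t * Real.cosh (φ a t)) s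

/-- Squared norm of the second fundamental form, `|II|²(s) = 2·(B''(s)/B(s) − 1)`. -/
noncomputable def IIsq (a s : ℝ) : ℝ := 2 * (deriv (deriv (B a)) s / B a s - 1)

/-- The mode-`k` potential `W_k(s) = |II|²(s) − 2 − k²/B(s)²`. -/
noncomputable def W (a : ℝ) (k : ℤ) (s : ℝ) : ℝ := IIsq a s - 2 - (k : ℝ) ^ 2 / (B a s) ^ 2

/-- Inverse hyperbolic cosine: `arcosh x = log (x + √(x² − 1))`. -/
noncomputable def arcosh (x : ℝ) : ℝ := Real.log (x + Real.sqrt (x ^ 2 - 1))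

/-- The axial boost field `u_*(s) = −a·sinh(2s)/B(s)`. -/
noncomputable def ustar (a s : ℝ) : ℝ := -a * Real.sinh (2 * s) / B a s

/-- The radial quadratic form of mode `k`:
`S_k(u) = ∫_{−s₀}^{s₀} (B·u'² − B·W_k·u²) − coth(r)·B(s₀)·(u(s₀)² + u(−s₀)²)`,
where `u'` is the derivative of `u` within `[−s₀, s₀]`. -/
noncomputable def Sk (a s₀ r : ℝ) (k : ℤ) (u : ℝ → ℝ) : ℝ :=
  (∫ s in (-s₀)..s₀,
      (B a s * (derivWithin u (Set.Icc (-s₀) s₀) s) ^ 2 - B a s * W a k s * u s ^ 2))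
    - Real.cosh r / Real.sinh r * B a s₀ * (u s₀ ^ 2 + u (-s₀) ^ 2)

/-- `u` solves the Sturm–Liouville equation `(p u')' + q u = 0` on `ℝ`. Differentiability of `u` and
of the flux `p u'` is part of the notion, so that no derivative takes its junk value. -/
structure IsSturmLiouvilleSolution (p q u : ℝ → ℝ) : Prop where
  differentiable : Differentiable ℝ u
  hasDerivAt_flux : ∀ s, HasDerivAt (fun t => p t * deriv u t) (-(q s * u s)) s

/-- The Wronskian `p (u v' - u' v)` of two functions, weighted by the leading coefficient `p` of a
Sturm–Liouville equation so that it is constant for two solutions. -/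
noncomputable def wronskian (p u v : ℝ → ℝ) (s : ℝ) : ℝ :=
  p s * (u s * deriv v s - deriv u s * v s)

theorem exists_wronskian_eq_zero (p : ℝ → ℝ) {u v : ℝ → ℝ} {x y : ℝ}
    (hu : ∀ s ∈ Set.Icc x y, DifferentiableAt ℝ u s)
    (hv : ∀ s ∈ Set.Icc x y, DifferentiableAt ℝ v s)
    (hxy : x < y) (hvx : v x = 0) (hvy : v y = 0) (hu0 : ∀ s ∈ Set.Icc x y, u s ≠ 0) :
    ∃ c ∈ Set.Ioo x y, wronskian p u v c = 0 := by
  have hquot : ∀ s ∈ Set.Icc x y, HasDerivAt (fun t => v t / u t)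
      ((deriv v s * u s - v s * deriv u s) / u s ^ 2) s := fun s hs =>
    (hv s hs).hasDerivAt.div (hu s hs).hasDerivAt (hu0 s hs)
  obtain ⟨c, hc, hc0⟩ := exists_hasDerivAt_eq_zero hxy (HasDerivAt.continuousOn hquot)
    (by simp [hvx, hvy]) fun s hs => hquot s (Set.Ioo_subset_Icc_self hs)
  have huc : u c ^ 2 ≠ 0 := pow_ne_zero 2 (hu0 c (Set.Ioo_subset_Icc_self hc))
  have hnum : deriv v c * u c - v c * deriv u c = 0 := (div_eq_zero_iff.mp hc0).resolve_right huc
  refine ⟨c, hc, ?_⟩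
  unfold wronskian
  linear_combination p c * hnum

theorem eq_zero_of_hasDerivAt_clm_apply {E : Type*} [NormedAddCommGroup E] [NormedSpace ℝ E]
    {L : ℝ → E →L[ℝ] E} (hL : Continuous L) {f : ℝ → E}
    (hf : ∀ t, HasDerivAt f (L t (f t)) t) {x : ℝ} (hx : f x = 0) : f = 0 := by
  funext y
  obtain ⟨r, hxr, hyr⟩ : ∃ r, x ∈ Set.Ioo (-r) r ∧ y ∈ Set.Ioo (-r) r := by
    refine ⟨max |x| |y| + 1, abs_lt.mp ?_, abs_lt.mp ?_⟩ <;> grind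
  obtain ⟨C, hC⟩ := (isCompact_Icc (a := -r) (b := r)).exists_bound_of_continuousOn hL.continuousOn
  have hlip : ∀ t ∈ Set.Ioo (-r) r, LipschitzOnWith C.toNNReal (L t) Set.univ := fun t ht =>
    ((L t).lipschitz.weaken (NNReal.coe_le_coe.mp <|
      (hC t (Set.Ioo_subset_Icc_self ht)).trans (Real.le_coe_toNNReal C))).lipschitzOnWith
  exact ODE_solution_unique_of_mem_Ioo hlip hxr (fun t _ => ⟨hf t, trivial⟩)
    (fun t _ => ⟨by simp [hasDerivAt_zero], trivial⟩) hx hyr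

namespace IsSturmLiouvilleSolution

variable {p q u v : ℝ → ℝ}

theorem of_contDiff (hp : Differentiable ℝ p) (hu : ContDiff ℝ 2 u)
    (heq : ∀ s, deriv (fun t => p t * deriv u t) s + q s * u s = 0) :
    IsSturmLiouvilleSolution p q u where
  differentiable := hu.differentiable two_ne_zero
  hasDerivAt_flux s := by
    rw [← eq_neg_of_add_eq_zero_left (heq s)]
    exact ((hp s).mul (hu.differentiable_deriv_two s)).hasDerivAt

theorem hasDerivAt_wronskian (hu : IsSturmLiouvilleSolution p q u)
    (hv : IsSturmLiouvilleSolution p q v) (s : ℝ) : HasDerivAt (wronskian p u v) 0 s := by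
  have hW : wronskian p u v = fun t => u t * (p t * deriv v t) - p t * deriv u t * v t := by
    funext t
    unfold wronskian
    ring
  rw [hW]
  refine (((hu.differentiable s).hasDerivAt.mul (hv.hasDerivAt_flux s)).sub
    ((hu.hasDerivAt_flux s).mul (hv.differentiable s).hasDerivAt)).congr_deriv ?_
  ring

theorem wronskian_eq (hu : IsSturmLiouvilleSolution p q u) (hv : IsSturmLiouvilleSolution p q v)
    (x y : ℝ) : wronskian p u v x = wronskian p u v y :=
  is_const_of_deriv_eq_zero (fun s => (hu.hasDerivAt_wronskian hv s).differentiableAt)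
    (fun s => (hu.hasDerivAt_wronskian hv s).deriv) x y

theorem eq_zero_of_eq_zero_of_deriv_eq_zero (hp : Continuous p) (hp0 : ∀ s, p s ≠ 0)
    (hq : Continuous q) (hu : IsSturmLiouvilleSolution p q u) {x : ℝ} (hx : u x = 0)
    (hx' : deriv u x = 0) : u = 0 := by
  -- `(u, p u')` solves the first-order system `(y, z)' = (z / p, -q y)`.
  let L : ℝ → ℝ × ℝ →L[ℝ] ℝ × ℝ := fun t =>
    (p t)⁻¹ • (ContinuousLinearMap.inl ℝ ℝ ℝ).comp (ContinuousLinearMap.snd ℝ ℝ ℝ) -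
      q t • (ContinuousLinearMap.inr ℝ ℝ ℝ).comp (ContinuousLinearMap.fst ℝ ℝ ℝ)
  have hL : Continuous L :=
    ((hp.inv₀ hp0).smul continuous_const).sub (hq.smul continuous_const)
  have hsys : ∀ t, HasDerivAt (fun t => (u t, p t * deriv u t)) (L t (u t, p t * deriv u t)) t := by
    intro t
    convert (hu.differentiable t).hasDerivAt.prodMk (hu.hasDerivAt_flux t) using 1
    simp [L, hp0 t]
  have hzero := eq_zero_of_hasDerivAt_clm_apply hL hsys (x := x) (by simp [hx, hx'])
  funext t
  exact congrArg Prod.fst (congrFun hzero t)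

theorem exists_mem_Icc_eq_zero (hp : Continuous p) (hp0 : ∀ s, p s ≠ 0) (hq : Continuous q)
    (hu : IsSturmLiouvilleSolution p q u) (hv : IsSturmLiouvilleSolution p q v) (hv0 : v ≠ 0)
    {x y : ℝ} (hxy : x < y) (hvx : v x = 0) (hvy : v y = 0) : ∃ c ∈ Set.Icc x y, u c = 0 := by
  by_contra! hu0
  obtain ⟨c, -, hWc⟩ :=
    exists_wronskian_eq_zero p (fun s _ => hu.differentiable s) (fun s _ => hv.differentiable s)
      hxy hvx hvy hu0
  have hWx : p x * (u x * deriv v x) = 0 := by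
    simpa [wronskian, hvx] using (hu.wronskian_eq hv x c).trans hWc
  have hvx' : deriv v x = 0 := by
    simpa [hp0 x, hu0 x (Set.left_mem_Icc.mpr hxy.le)] using hWx
  exact hv0 (hv.eq_zero_of_eq_zero_of_deriv_eq_zero hp hp0 hq hvx hvx')

end IsSturmLiouvilleSolution

section Profile

variable {a : ℝ}

theorem radicand_B_pos (ha : 1 / 2 < a) (s : ℝ) : 0 < a * Real.cosh (2 * s) - 1 / 2 := by
  nlinarith [Real.one_le_cosh (2 * s)]

theorem B_pos (ha : 1 / 2 < a) (s : ℝ) : 0 < B a s :=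
  Real.sqrt_pos.mpr (radicand_B_pos ha s)

theorem B_sq (ha : 1 / 2 < a) (s : ℝ) : B a s ^ 2 = a * Real.cosh (2 * s) - 1 / 2 :=
  Real.sq_sqrt (radicand_B_pos ha s).le

theorem contDiff_B (ha : 1 / 2 < a) {n : WithTop ℕ∞} : ContDiff ℝ n (B a) :=
  ContDiff.sqrt (by fun_prop) fun s => (radicand_B_pos ha s).ne'

theorem hasDerivAt_B (ha : 1 / 2 < a) (s : ℝ) : HasDerivAt (B a) (deriv (B a) s) s :=
  ((contDiff_B ha (n := 1)).differentiable one_ne_zero s).hasDerivAt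

theorem hasDerivAt_deriv_B (ha : 1 / 2 < a) (s : ℝ) :
    HasDerivAt (deriv (B a)) (deriv (deriv (B a)) s) s :=
  ((contDiff_B ha).differentiable_deriv_two s).hasDerivAt

theorem B_mul_deriv_B (ha : 1 / 2 < a) (s : ℝ) :
    B a s * deriv (B a) s = a * Real.sinh (2 * s) := by
  have hsq : (fun t => B a t ^ 2) = fun t => a * Real.cosh (2 * t) - 1 / 2 := funext (B_sq ha)
  have hleft := (hasDerivAt_B ha s).pow 2
  have hright := ((((hasDerivAt_id' s).const_mul 2).cosh).const_mul a).sub_const (1 / 2)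
  have hderiv := hleft.unique (hsq ▸ hright)
  linear_combination hderiv / 2

theorem B_mul_deriv_deriv_B (ha : 1 / 2 < a) (s : ℝ) :
    B a s * deriv (deriv (B a)) s = 2 * B a s ^ 2 + 1 - deriv (B a) s ^ 2 := by
  have hprod : (fun t => B a t * deriv (B a) t) = fun t => a * Real.sinh (2 * t) :=
    funext (B_mul_deriv_B ha)
  have hleft := (hasDerivAt_B ha s).mul (hasDerivAt_deriv_B ha s)
  have hright := (((hasDerivAt_id' s).const_mul 2).sinh).const_mul a
  have hderiv := hleft.unique (hprod ▸ hright)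
  linear_combination hderiv - 2 * B_sq ha s

theorem ustar_eq_neg_deriv_B (ha : 1 / 2 < a) : ustar a = -deriv (B a) := by
  funext s
  rw [ustar, Pi.neg_apply, div_eq_iff (B_pos ha s).ne']
  linear_combination B_mul_deriv_B ha s

theorem ustar_neg (ha : 1 / 2 < a) {s : ℝ} (hs : 0 < s) : ustar a s < 0 := by
  have hsinh : 0 < Real.sinh (2 * s) := Real.sinh_pos_iff.mpr (by positivity)
  exact div_neg_of_neg_of_pos (mul_neg_of_neg_of_pos (by linarith) hsinh) (B_pos ha s)

theorem B_mul_IIsq_sub_two (ha : 1 / 2 < a) (s : ℝ) :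
    B a s * (IIsq a s - 2) = 2 * deriv (deriv (B a)) s - 4 * B a s := by
  have := (B_pos ha s).ne'
  unfold IIsq
  field_simp
  ring

theorem continuous_B_mul_IIsq_sub_two (ha : 1 / 2 < a) :
    Continuous fun s => B a s * (IIsq a s - 2) := by
  have hB : Continuous (B a) := (contDiff_B ha (n := 0)).continuous
  have hB'' : Continuous (deriv (deriv (B a))) :=
    ((contDiff_B ha (n := 2)).deriv' (n := 1)).continuous_deriv le_rfl
  simp only [B_mul_IIsq_sub_two ha]
  fun_prop

theorem isSturmLiouvilleSolution_ustar (ha : 1 / 2 < a) :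
    IsSturmLiouvilleSolution (B a) (fun s => B a s * (IIsq a s - 2)) (ustar a) := by
  rw [ustar_eq_neg_deriv_B ha]
  refine ⟨(contDiff_B ha).differentiable_deriv_two.neg, fun s => ?_⟩
  have hflux : (fun t => B a t * deriv (-deriv (B a)) t) =
      fun t => deriv (B a) t ^ 2 - (2 * B a t ^ 2 + 1) := by
    funext t
    rw [deriv.neg]
    linear_combination -B_mul_deriv_deriv_B ha t
  rw [hflux, B_mul_IIsq_sub_two ha]
  refine (((hasDerivAt_deriv_B ha s).pow 2).sub
    ((((hasDerivAt_B ha s).pow 2).const_mul 2).add_const 1)).congr_deriv ?_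
  simp only [Pi.neg_apply]
  ring

theorem K_pos (ha : 1 / 2 < a) : 0 < K a :=
  Real.sqrt_pos.mpr (by nlinarith)

end Profile

theorem sturm_separation_general (a : ℝ) (ha : 1 / 2 < a) (ψ : ℝ → ℝ)
    (hψ : ContDiff ℝ 2 ψ)
    (hode : ∀ s : ℝ, deriv (fun t => B a t * deriv ψ t) s
        + B a s * (IIsq a s - 2) * ψ s = 0)
    (hψ_ne : ψ ≠ 0) :
    ¬ ∃ s₁ s₂ : ℝ, 0 < s₁ ∧ s₁ < s₂ ∧ ψ s₁ = 0 ∧ ψ s₂ = 0 := by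
  rintro ⟨s₁, s₂, hs₁, hs, hψ₁, hψ₂⟩
  have hB : Differentiable ℝ (B a) := fun s => (hasDerivAt_B ha s).differentiableAt
  have hψ_sol := IsSturmLiouvilleSolution.of_contDiff hB hψ hode
  obtain ⟨c, hc, hc0⟩ := (isSturmLiouvilleSolution_ustar ha).exists_mem_Icc_eq_zero
    hB.continuous (fun s => (B_pos ha s).ne') (continuous_B_mul_IIsq_sub_two ha)
    hψ_sol hψ_ne hs hψ₁ hψ₂
  exact (ustar_neg ha (hs₁.trans_le hc.1)).ne hc0

/-- Sturm separation: if `ψ` is a `C²` solution of the mode-zero Jacobi equation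
`(B·ψ')' + B·(|II|² − 2)·ψ = 0` with `ψ(0) = 1/(2K)` and `ψ'(0) = 0`, then `ψ`
has at most one zero in `(0, ∞)`. -/
theorem sturm_separation (a : ℝ) (ha : 1 / 2 < a) (ψ : ℝ → ℝ)
    (hψ : ContDiff ℝ 2 ψ)
    (hode : ∀ s : ℝ, deriv (fun t => B a t * deriv ψ t) s
        + B a s * (IIsq a s - 2) * ψ s = 0)
    (hψ0 : ψ 0 = 1 / (2 * K a)) (hψ0' : deriv ψ 0 = 0) :
    ¬ ∃ s₁ s₂ : ℝ, 0 < s₁ ∧ s₁ < s₂ ∧ ψ s₁ = 0 ∧ ψ s₂ = 0 := by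
  have hψ0_pos : 0 < ψ 0 := hψ0 ▸ one_div_pos.mpr (mul_pos two_pos (K_pos ha))
  exact sturm_separation_general a ha ψ hψ hode fun h => hψ0_pos.ne' (congrFun h 0)

end MoriCatenoid
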